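/- Suppose at ε̄ ∈ int(E) the optimal sets P*(ε̄) and D*(ε̄) are singletons {X*} and {(y*, S*)}, and that (X*, y*, S*) is strictly complementary. Then there exists ξ > 0 with (ε̄−ξ, ε̄+ξ) ⊆ int(E) such that for every ε ∈ (ε̄−ξ, ε̄+ξ) the problems (P_ε) and (D_ε) have unique optimal solutions (X*(ε), y*(ε), S*(ε)), the map ε ↦ (X*(ε), y*(ε), S*(ε)) is continuously differentiable on (ε̄−ξ, ε̄+ξ) with (X*(ε̄), y*(ε̄), S*(ε̄)) = (X*, y*, S*), and each (X*(ε), y*(ε), S*(ε)) is strictly complementary; in particular, dim B(ε) and dim N(ε) are constant on (ε̄−ξ, ε̄+ξ) and ε̄ is not a transition point. -/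

import Mathlib

open Matrix Set

noncomputable section

variable {n m : ℕ}

/-- Feasibility for the primal SDO problem `(P_ε)` (the feasible set does not depend on `ε`). -/
def PrimalFeasible (A : Fin m → Matrix (Fin n) (Fin n) ℝ) (b : Fin m → ℝ)
    (X : Matrix (Fin n) (Fin n) ℝ) : Prop :=
  X.IsSymm ∧ (∀ i, ((A i) * X).trace = b i) ∧ X.PosSemidef

/-- Feasibility for the dual SDO problem `(D_ε)`. -/
def DualFeasible (C Cbar : Matrix (Fin n) (Fin n) ℝ)
    (A : Fin m → Matrix (Fin n) (Fin n) ℝ) (ε : ℝ)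
    (y : Fin m → ℝ) (S : Matrix (Fin n) (Fin n) ℝ) : Prop :=
  S.IsSymm ∧ (∑ i, y i • A i) + S = C + ε • Cbar ∧ S.PosSemidef

/-- The optimal value function `v(ε)` of `(P_ε)`, with values in `EReal`. -/
def vfun (C Cbar : Matrix (Fin n) (Fin n) ℝ) (A : Fin m → Matrix (Fin n) (Fin n) ℝ)
    (b : Fin m → ℝ) (ε : ℝ) : EReal :=
  sInf ((fun X => (((C + ε • Cbar) * X).trace : EReal)) '' {X | PrimalFeasible A b X})

/-- `E = {ε : v(ε) > -∞}`. -/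
def Eset (C Cbar : Matrix (Fin n) (Fin n) ℝ) (A : Fin m → Matrix (Fin n) (Fin n) ℝ)
    (b : Fin m → ℝ) : Set ℝ :=
  {ε | ⊥ < vfun C Cbar A b ε}

/-- The primal optimal set `P*(ε)`. -/
def PrimalOpt (C Cbar : Matrix (Fin n) (Fin n) ℝ) (A : Fin m → Matrix (Fin n) (Fin n) ℝ)
    (b : Fin m → ℝ) (ε : ℝ) : Set (Matrix (Fin n) (Fin n) ℝ) :=
  {X | PrimalFeasible A b X ∧ ∀ X', PrimalFeasible A b X' →
    ((C + ε • Cbar) * X).trace ≤ ((C + ε • Cbar) * X').trace}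

/-- The dual optimal set `D*(ε)`. -/
def DualOpt (C Cbar : Matrix (Fin n) (Fin n) ℝ) (A : Fin m → Matrix (Fin n) (Fin n) ℝ)
    (b : Fin m → ℝ) (ε : ℝ) : Set ((Fin m → ℝ) × Matrix (Fin n) (Fin n) ℝ) :=
  {p | DualFeasible C Cbar A ε p.1 p.2 ∧ ∀ y' S', DualFeasible C Cbar A ε y' S' →
    ∑ i, b i * y' i ≤ ∑ i, b i * p.1 i}

/-- A maximally complementary optimal solution: `X` lies in the relative interior of `P*(ε)`
and `(y, S)` in the relative interior of `D*(ε)`. -/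
def MaxComp (C Cbar : Matrix (Fin n) (Fin n) ℝ) (A : Fin m → Matrix (Fin n) (Fin n) ℝ)
    (b : Fin m → ℝ) (ε : ℝ) (X : Matrix (Fin n) (Fin n) ℝ) (y : Fin m → ℝ)
    (S : Matrix (Fin n) (Fin n) ℝ) : Prop :=
  X ∈ intrinsicInterior ℝ (PrimalOpt C Cbar A b ε) ∧
    (y, S) ∈ intrinsicInterior ℝ (DualOpt C Cbar A b ε)

/-- `π(ε) = π(ε')`: the optimal partitions at `ε` and `ε'` coincide, expressed through
maximally complementary solutions (`B = range X*`, `N = range S*`, `T` being determined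
by `B` and `N`). -/
def SamePartition (C Cbar : Matrix (Fin n) (Fin n) ℝ) (A : Fin m → Matrix (Fin n) (Fin n) ℝ)
    (b : Fin m → ℝ) (ε ε' : ℝ) : Prop :=
  ∃ X y S X' y' S', MaxComp C Cbar A b ε X y S ∧ MaxComp C Cbar A b ε' X' y' S' ∧
    LinearMap.range X.mulVecLin = LinearMap.range X'.mulVecLin ∧
    LinearMap.range S.mulVecLin = LinearMap.range S'.mulVecLin

/-- The standing assumptions: symmetric data, linearly independent constraint matrices and
the interior point condition at `ε = 0`. -/
def StandingAssumptions (C Cbar : Matrix (Fin n) (Fin n) ℝ)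
    (A : Fin m → Matrix (Fin n) (Fin n) ℝ) (b : Fin m → ℝ) : Prop :=
  C.IsSymm ∧ Cbar.IsSymm ∧ (∀ i, (A i).IsSymm) ∧ LinearIndependent ℝ A ∧
    ∃ X y S, PrimalFeasible A b X ∧ X.PosDef ∧ DualFeasible C Cbar A 0 y S ∧ S.PosDef

/-- The invariancy set of `ε̄`. -/
def InvSet (C Cbar : Matrix (Fin n) (Fin n) ℝ) (A : Fin m → Matrix (Fin n) (Fin n) ℝ)
    (b : Fin m → ℝ) (εbar : ℝ) : Set ℝ :=
  {ε | ε ∈ interior (Eset C Cbar A b) ∧ SamePartition C Cbar A b ε εbar}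

/-- `dim B(ε) = dim B(ε')` and `dim N(ε) = dim N(ε')`, expressed through maximally
complementary solutions. -/
def DimsMatch (C Cbar : Matrix (Fin n) (Fin n) ℝ) (A : Fin m → Matrix (Fin n) (Fin n) ℝ)
    (b : Fin m → ℝ) (ε ε' : ℝ) : Prop :=
  ∀ X y S X' y' S', MaxComp C Cbar A b ε X y S → MaxComp C Cbar A b ε' X' y' S' →
    Module.finrank ℝ (LinearMap.range X.mulVecLin) =
        Module.finrank ℝ (LinearMap.range X'.mulVecLin) ∧
      Module.finrank ℝ (LinearMap.range S.mulVecLin) =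
        Module.finrank ℝ (LinearMap.range S'.mulVecLin)

/-- A transition point: a singleton invariancy set such that every neighborhood contains a
parameter at which `dim B` or `dim N` differs. -/
def IsTransitionPoint (C Cbar : Matrix (Fin n) (Fin n) ℝ) (A : Fin m → Matrix (Fin n) (Fin n) ℝ)
    (b : Fin m → ℝ) (εbar : ℝ) : Prop :=
  εbar ∈ interior (Eset C Cbar A b) ∧
    (∀ ε ∈ interior (Eset C Cbar A b), ε ≠ εbar → ¬ SamePartition C Cbar A b ε εbar) ∧
    ∀ ξ : ℝ, 0 < ξ → ∃ ε ∈ Set.Ioo (εbar - ξ) (εbar + ξ) ∩ interior (Eset C Cbar A b),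
      ¬ DimsMatch C Cbar A b ε εbar

/-- Existence of a strictly complementary optimal solution at `ε`. -/
def HasStrictComp (C Cbar : Matrix (Fin n) (Fin n) ℝ) (A : Fin m → Matrix (Fin n) (Fin n) ℝ)
    (b : Fin m → ℝ) (ε : ℝ) : Prop :=
  ∃ X y S, X ∈ PrimalOpt C Cbar A b ε ∧ (y, S) ∈ DualOpt C Cbar A b ε ∧ (X + S).PosDef

/-- Nonsingularity of the Jacobian `J(X, y, S)` of the optimality system, as a linear map on
`S^n × ℝ^m × S^n`: only the trivial symmetric triple is mapped to zero. -/
def JNonsingular (A : Fin m → Matrix (Fin n) (Fin n) ℝ)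
    (X S : Matrix (Fin n) (Fin n) ℝ) : Prop :=
  ∀ (DX DS : Matrix (Fin n) (Fin n) ℝ) (Dy : Fin m → ℝ), DX.IsSymm → DS.IsSymm →
    (∀ i, ((A i) * DX).trace = 0) → ((∑ i, Dy i • A i) + DS = 0) →
    (DX * S + S * DX + X * DS + DS * X = 0) → DX = 0 ∧ Dy = 0 ∧ DS = 0

/-- Primal nondegeneracy of a primal feasible `X`. -/
def PrimalNondeg (A : Fin m → Matrix (Fin n) (Fin n) ℝ)
    (X : Matrix (Fin n) (Fin n) ℝ) : Prop :=
  ∃ (r : ℕ) (M₁ : Matrix (Fin n) (Fin r) ℝ) (M₂ : Matrix (Fin n) (Fin (n - r)) ℝ),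
    M₁ᵀ * M₁ = 1 ∧ M₂ᵀ * M₂ = 1 ∧ M₁ᵀ * M₂ = 0 ∧
    LinearMap.range M₁.mulVecLin = LinearMap.range X.mulVecLin ∧
    LinearIndependent ℝ (fun i =>
      Matrix.fromBlocks (M₁ᵀ * (A i) * M₁) (M₁ᵀ * (A i) * M₂) (M₂ᵀ * (A i) * M₁) 0)

/-- Dual nondegeneracy of a dual feasible `(y, S)` (the condition involves only `S`). -/
def DualNondeg (A : Fin m → Matrix (Fin n) (Fin n) ℝ)
    (S : Matrix (Fin n) (Fin n) ℝ) : Prop :=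
  ∃ (k : ℕ) (N₁ : Matrix (Fin n) (Fin k) ℝ),
    N₁ᵀ * N₁ = 1 ∧ LinearMap.range N₁.mulVecLin = LinearMap.ker S.mulVecLin ∧
    ∀ W : Matrix (Fin k) (Fin k) ℝ, W.IsSymm →
      W ∈ Submodule.span ℝ (Set.range fun i => N₁ᵀ * (A i) * N₁)

/-- A central solution with parameter `μ` for the problems `(P_ε)` and `(D_ε)`. -/
def CentralSol (C Cbar : Matrix (Fin n) (Fin n) ℝ) (A : Fin m → Matrix (Fin n) (Fin n) ℝ)
    (b : Fin m → ℝ) (ε μ : ℝ) (X : Matrix (Fin n) (Fin n) ℝ) (y : Fin m → ℝ)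
    (S : Matrix (Fin n) (Fin n) ℝ) : Prop :=
  PrimalFeasible A b X ∧ DualFeasible C Cbar A ε y S ∧
    X * S = μ • (1 : Matrix (Fin n) (Fin n) ℝ)

/-- The Frobenius norm of a matrix. -/
def frobNorm {α β : Type*} [Fintype α] [Fintype β] (M : Matrix α β ℝ) : ℝ :=
  Real.sqrt (∑ i, ∑ j, (M i j) ^ 2)

/-- The spectral norm (induced 2-norm) of a square matrix. -/
def specNorm {N : ℕ} (M : Matrix (Fin N) (Fin N) ℝ) : ℝ :=
  ‖LinearMap.toContinuousLinearMap (Matrix.toEuclideanLin M)‖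

/-- The smallest eigenvalue of a symmetric matrix, via the Rayleigh quotient. -/
def lamMin {k : ℕ} (M : Matrix (Fin k) (Fin k) ℝ) : ℝ :=
  sInf {r : ℝ | ∃ x : Fin k → ℝ, (∑ i, (x i) ^ 2) = 1 ∧ r = x ⬝ᵥ M.mulVec x}

/-- `θ^μ`: the operator norm of the inverse of the Jacobian `J(X, y, S)` on
`S^n × ℝ^m × S^n`, characterized as the least constant `t ≥ 0` with
`‖(ΔX, Δy, ΔS)‖ ≤ t * ‖J(X,y,S)(ΔX, Δy, ΔS)‖` for all symmetric `ΔX`, `ΔS`. -/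
def thetaMu (A : Fin m → Matrix (Fin n) (Fin n) ℝ)
    (X S : Matrix (Fin n) (Fin n) ℝ) : ℝ :=
  sInf {t : ℝ | 0 ≤ t ∧ ∀ (DX DS : Matrix (Fin n) (Fin n) ℝ) (Dy : Fin m → ℝ),
    DX.IsSymm → DS.IsSymm →
    Real.sqrt (frobNorm DX ^ 2 + (∑ i, (Dy i) ^ 2) + frobNorm DS ^ 2) ≤
      t * Real.sqrt ((∑ i, (((A i) * DX).trace) ^ 2) +
        frobNorm ((∑ i, Dy i • A i) + DS) ^ 2 +
        frobNorm ((1 / 2 : ℝ) • (DX * S + S * DX + X * DS + DS * X)) ^ 2)}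

/-- A nonlinearity interval: a non-singleton open subinterval of `int(E)`, of maximal length,
on which `dim B(·)` and `dim N(·)` are constant while the optimal partition `π(·)` varies. -/
def IsNonlinearityInterval (C Cbar : Matrix (Fin n) (Fin n) ℝ)
    (A : Fin m → Matrix (Fin n) (Fin n) ℝ) (b : Fin m → ℝ) (I : Set ℝ) : Prop :=
  I ⊆ interior (Eset C Cbar A b) ∧ IsOpen I ∧ I.OrdConnected ∧
    (∃ a ∈ I, ∃ c ∈ I, a ≠ c) ∧
    (∀ ε ∈ I, ∀ ε' ∈ I, DimsMatch C Cbar A b ε ε') ∧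
    ¬ (∀ ε ∈ I, ∀ ε' ∈ I, SamePartition C Cbar A b ε ε') ∧
    ∀ I' : Set ℝ, I ⊆ I' → I' ⊆ interior (Eset C Cbar A b) → IsOpen I' → I'.OrdConnected →
      (∀ ε ∈ I', ∀ ε' ∈ I', DimsMatch C Cbar A b ε ε') → I' = I

end

namespace Stmt19Aux

open scoped Topology
open Filter

variable {n m : ℕ}

theorem dot_symm {X : Matrix (Fin n) (Fin n) ℝ} (hX : X.IsSymm) (u v : Fin n → ℝ) :
    u ⬝ᵥ (X *ᵥ v) = (X *ᵥ u) ⬝ᵥ v := by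
  rw [Matrix.dotProduct_mulVec, ← Matrix.mulVec_transpose, hX.eq]

theorem herm_of_symm {X : Matrix (Fin n) (Fin n) ℝ} (hX : X.IsSymm) : X.IsHermitian := by
  rw [Matrix.IsHermitian, Matrix.conjTranspose_eq_transpose_of_trivial, hX.eq]

theorem symm_of_herm {X : Matrix (Fin n) (Fin n) ℝ} (hX : X.IsHermitian) : X.IsSymm := by
  rw [Matrix.IsHermitian, Matrix.conjTranspose_eq_transpose_of_trivial] at hX
  exact hX

/-- anticommuting symmetric matrices with positive definite sum are positive semidefinite -/
theorem psd_of_anticomm {X S : Matrix (Fin n) (Fin n) ℝ} (hX : X.IsSymm)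
    (h : X * S + S * X = 0) (hpd : (X + S).PosDef) : X.PosSemidef := by
  have hH := herm_of_symm hX
  rw [hH.posSemidef_iff_eigenvalues_nonneg]
  intro i
  by_contra hneg
  simp only [Pi.zero_apply, not_le] at hneg
  set v : Fin n → ℝ := ⇑(hH.eigenvectorBasis i) with hv
  have hev : X *ᵥ v = hH.eigenvalues i • v := hH.mulVec_eigenvectorBasis i
  set l := hH.eigenvalues i
  have hv0 : v ≠ 0 := by
    intro h0
    have := hH.eigenvectorBasis.orthonormal.ne_zero i
    apply this
    ext j
    exact congrFun h0 j
  have h1 := hpd.dotProduct_mulVec_pos hv0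
  simp only [star_trivial, Matrix.add_mulVec, dotProduct_add, hev, dotProduct_smul,
    smul_eq_mul] at h1
  have h2 : v ⬝ᵥ ((X * S + S * X) *ᵥ v) = 0 := by rw [h]; simp
  rw [Matrix.add_mulVec, dotProduct_add, ← Matrix.mulVec_mulVec, ← Matrix.mulVec_mulVec,
    dot_symm hX, hev, Matrix.mulVec_smul, smul_dotProduct, dotProduct_smul, smul_eq_mul] at h2
  have h3 : v ⬝ᵥ (S *ᵥ v) = 0 := by
    have : l * (v ⬝ᵥ (S *ᵥ v)) = 0 := by linarith
    exact (mul_eq_zero.mp this).resolve_left hneg.ne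
  have h4 : 0 ≤ v ⬝ᵥ v := Finset.sum_nonneg fun i _ => mul_self_nonneg _
  nlinarith

theorem trace_mul_psd {X S : Matrix (Fin n) (Fin n) ℝ} (hX : X.PosSemidef) (hS : S.PosSemidef) :
    0 ≤ (X * S).trace ∧ ((X * S).trace = 0 → X * S = 0) := by
  open scoped MatrixOrder in
  obtain ⟨B, rfl⟩ := CStarAlgebra.nonneg_iff_eq_star_mul_self.mp hX.nonneg
  open scoped MatrixOrder in
  obtain ⟨D, rfl⟩ := CStarAlgebra.nonneg_iff_eq_star_mul_self.mp hS.nonneg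
  simp only [Matrix.star_eq_conjTranspose]
  have key : (Bᴴ * B * (Dᴴ * D)).trace = ((B * Dᴴ)ᴴ * (B * Dᴴ)).trace := by
    rw [Matrix.conjTranspose_mul, Matrix.conjTranspose_conjTranspose, Matrix.trace_mul_comm]
    simp only [Matrix.mul_assoc]
    rw [Matrix.trace_mul_comm]
    simp only [Matrix.mul_assoc]
  constructor
  · rw [key]
    exact (Matrix.posSemidef_conjTranspose_mul_self _).trace_nonneg
  · rw [key, Matrix.trace_conjTranspose_mul_self_eq_zero_iff]
    intro h
    rw [Matrix.mul_assoc, ← Matrix.mul_assoc B, h]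
    simp

theorem dot_self_eq_zero {v : Fin n → ℝ} (h : v ⬝ᵥ v ≤ 0) : v = 0 := by
  have h4 : 0 ≤ v ⬝ᵥ v := Finset.sum_nonneg fun i _ => mul_self_nonneg _
  exact dotProduct_self_eq_zero.mp (le_antisymm h h4)

/-- simultaneous diagonalization -/
theorem exists_diag {X S : Matrix (Fin n) (Fin n) ℝ} (hX : X.PosSemidef) (hS : S.PosSemidef)
    (hXS : X * S = 0) (hpd : (X + S).PosDef) :
    ∃ (U : Matrix (Fin n) (Fin n) ℝ) (x s : Fin n → ℝ), Uᵀ * U = 1 ∧ U * Uᵀ = 1 ∧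
      X * U = U * diagonal x ∧ S * U = U * diagonal s ∧ (∀ i, 0 ≤ x i) ∧ (∀ i, 0 ≤ s i) ∧
      ∀ i, 0 < x i + s i := by
  have hXs := symm_of_herm hX.1
  have hSs := symm_of_herm hS.1
  have hSX : S * X = 0 := by
    have := congrArg Matrix.transpose hXS
    rwa [Matrix.transpose_mul, hXs.eq, hSs.eq, Matrix.transpose_zero] at this
  have hH : (X - S).IsHermitian := hX.1.sub hS.1
  set w := hH.eigenvalues
  let u : Fin n → Fin n → ℝ := fun j => ⇑(hH.eigenvectorBasis j)
  have hev : ∀ j, (X - S) *ᵥ u j = w j • u j := hH.mulVec_eigenvectorBasis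
  have hu0 : ∀ j, u j ≠ 0 := by
    intro i h0
    have := hH.eigenvectorBasis.orthonormal.ne_zero i
    apply this
    ext j
    exact congrFun h0 j
  have key : ∀ j, ∃ a c : ℝ, 0 ≤ a ∧ 0 ≤ c ∧ 0 < a + c ∧ X *ᵥ u j = a • u j ∧
      S *ᵥ u j = c • u j := by
    intro j
    have e := hev j
    rw [Matrix.sub_mulVec] at e
    have eX : X *ᵥ (X *ᵥ u j) = w j • (X *ᵥ u j) := by
      have := congrArg (X *ᵥ ·) e
      simp only [Matrix.mulVec_sub, Matrix.mulVec_smul] at this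
      rw [Matrix.mulVec_mulVec _ X S, hXS, Matrix.zero_mulVec, sub_zero] at this
      exact this
    have eS : S *ᵥ (S *ᵥ u j) = -(w j • (S *ᵥ u j)) := by
      have := congrArg (S *ᵥ ·) e
      simp only [Matrix.mulVec_sub, Matrix.mulVec_smul] at this
      rw [Matrix.mulVec_mulVec _ S X, hSX, Matrix.zero_mulVec, zero_sub] at this
      rw [← this, neg_neg]
    rcases lt_trichotomy (w j) 0 with hw | hw | hw
    · have hx := hX.dotProduct_mulVec_nonneg (X *ᵥ u j)
      rw [eX, star_trivial, dotProduct_smul, smul_eq_mul] at hx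
      have h0 : X *ᵥ u j = 0 := dot_self_eq_zero (by nlinarith)
      refine ⟨0, - w j, le_rfl, by linarith, by linarith, by simpa using h0, ?_⟩
      rw [h0, zero_sub] at e
      rw [neg_smul, ← e, neg_neg]
    · exfalso
      rw [hw, zero_smul] at e eX
      have h0 : X *ᵥ u j = 0 := by
        apply dot_self_eq_zero
        rw [← dot_symm hXs, eX, dotProduct_zero]
      have h1 : S *ᵥ u j = 0 := by simpa [h0] using e
      have := hpd.dotProduct_mulVec_pos (hu0 j)
      rw [Matrix.add_mulVec, h0, h1] at this
      simp at this
    · have hx := hS.dotProduct_mulVec_nonneg (S *ᵥ u j)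
      rw [eS, star_trivial, dotProduct_neg, dotProduct_smul, smul_eq_mul] at hx
      have h0 : S *ᵥ u j = 0 := dot_self_eq_zero (by nlinarith)
      refine ⟨w j, 0, hw.le, le_rfl, by linarith, ?_, by simpa using h0⟩
      rw [h0, sub_zero] at e
      exact e
  choose x s hx hs hxs hXu hSu using key
  have hU : (Matrix.of u) * (Matrix.of u)ᵀ = 1 := by
    ext i j
    have := (orthonormal_iff_ite.mp hH.eigenvectorBasis.orthonormal) j i
    rw [Matrix.mul_apply, Matrix.one_apply]
    simp only [PiLp.inner_apply] at this
    simp only [Matrix.of_apply, Matrix.transpose_apply, u]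
    simp only [RCLike.inner_apply, conj_trivial] at this
    rw [this]
    simp [eq_comm]
  refine ⟨(Matrix.of u)ᵀ, x, s, by simpa using hU, ?_, ?_, ?_, hx, hs, hxs⟩
  · rw [Matrix.transpose_transpose]
    exact mul_eq_one_comm.mp hU
  · ext i j
    rw [Matrix.mul_diagonal]
    have := congrFun (hXu j) i
    simp only [Matrix.mulVec, dotProduct, Pi.smul_apply, smul_eq_mul] at this
    simp only [Matrix.mul_apply, Matrix.transpose_apply, Matrix.of_apply]
    rw [this, mul_comm]
  · ext i j
    rw [Matrix.mul_diagonal]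
    have := congrFun (hSu j) i
    simp only [Matrix.mulVec, dotProduct, Pi.smul_apply, smul_eq_mul] at this
    simp only [Matrix.mul_apply, Matrix.transpose_apply, Matrix.of_apply]
    rw [this, mul_comm]

/-- kernel of the linearized complementarity condition -/
theorem kernel_aux {X S DX DS : Matrix (Fin n) (Fin n) ℝ} (hX : X.PosSemidef) (hS : S.PosSemidef)
    (hXS : X * S = 0) (hpd : (X + S).PosDef) (hDS : DS.IsSymm)
    (htr : (DX * DS).trace = 0)
    (h : DX * S + S * DX + X * DS + DS * X = 0) : DX * S = 0 ∧ DS * X = 0 := by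
  obtain ⟨U, x, s, hU, hU', hXU, hSU, hx, hs, hxs⟩ := exists_diag hX hS hXS hpd
  have hXs := symm_of_herm hX.1
  have hSs := symm_of_herm hS.1
  have hUX : Uᵀ * X = diagonal x * Uᵀ := by
    have := congrArg Matrix.transpose hXU
    rwa [Matrix.transpose_mul, Matrix.transpose_mul, hXs.eq, Matrix.diagonal_transpose] at this
  have hUS : Uᵀ * S = diagonal s * Uᵀ := by
    have := congrArg Matrix.transpose hSU
    rwa [Matrix.transpose_mul, Matrix.transpose_mul, hSs.eq, Matrix.diagonal_transpose] at this
  set d := Uᵀ * DX * U with hd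
  set e := Uᵀ * DS * U with he
  have hdS : Uᵀ * (DX * S) * U = d * diagonal s := by
    rw [hd, Matrix.mul_assoc, Matrix.mul_assoc, hSU]; simp only [Matrix.mul_assoc]
  have heX : Uᵀ * (DS * X) * U = e * diagonal x := by
    rw [he, Matrix.mul_assoc, Matrix.mul_assoc, hXU]; simp only [Matrix.mul_assoc]
  have hSd : Uᵀ * (S * DX) * U = diagonal s * d := by
    rw [hd, ← Matrix.mul_assoc Uᵀ S, hUS]; simp only [Matrix.mul_assoc]
  have hXe : Uᵀ * (X * DS) * U = diagonal x * e := by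
    rw [he, ← Matrix.mul_assoc Uᵀ X, hUX]; simp only [Matrix.mul_assoc]
  have heq : d * diagonal s + diagonal s * d + diagonal x * e + e * diagonal x = 0 := by
    rw [← hdS, ← heX, ← hSd, ← hXe, ← Matrix.add_mul, ← Matrix.mul_add, ← Matrix.add_mul,
      ← Matrix.mul_add, ← Matrix.add_mul, ← Matrix.mul_add, h]
    simp
  have hent : ∀ i j, (s i + s j) * d i j + (x i + x j) * e i j = 0 := by
    intro i j
    have := congrFun (congrFun heq i) j
    simp only [Matrix.add_apply, Matrix.mul_diagonal, Matrix.diagonal_mul,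
      Matrix.zero_apply] at this
    linarith
  have hes : eᵀ = e := by
    rw [he, Matrix.transpose_mul, Matrix.transpose_mul, hDS.eq, Matrix.transpose_transpose,
      Matrix.mul_assoc]
  have htr' : ∑ i, ∑ j, d i j * e i j = 0 := by
    have h1 : (d * e).trace = 0 := by
      rw [← htr, hd, he]
      have : Uᵀ * DX * U * (Uᵀ * DS * U) = Uᵀ * (DX * DS * U) := by
        calc Uᵀ * DX * U * (Uᵀ * DS * U) = Uᵀ * DX * (U * Uᵀ) * DS * U := by
              simp only [Matrix.mul_assoc]
          _ = _ := by rw [hU']; simp only [Matrix.mul_assoc, Matrix.one_mul]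
      rw [this, Matrix.trace_mul_comm, Matrix.mul_assoc, hU', Matrix.mul_one]
    rw [← h1, Matrix.trace]
    refine Finset.sum_congr rfl fun i _ => ?_
    rw [Matrix.diag_apply, Matrix.mul_apply]
    refine Finset.sum_congr rfl fun j _ => ?_
    rw [← congrFun (congrFun hes i) j, Matrix.transpose_apply]
  have hle : ∀ i j, d i j * e i j ≤ 0 := by
    intro i j
    have h1 := hent i j
    have h2 := hs i
    have h3 := hs j
    have h4 := hx i
    have h5 := hx j
    have h6 := hxs i
    by_contra hc
    push Not at hc
    rcases mul_pos_iff.mp hc with ⟨p, q⟩ | ⟨p, q⟩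
    · have : 0 ≤ (s j) * d i j + (x j) * e i j := by positivity
      nlinarith [mul_nonneg h2 p.le, mul_nonneg h4 q.le, mul_pos h6 p, mul_pos h6 q]
    · have : (s j) * d i j + (x j) * e i j ≤ 0 := by nlinarith
      rcases h2.eq_or_lt with h | h
      · have : 0 < x i := by linarith
        nlinarith [mul_neg_of_pos_of_neg this q]
      · nlinarith [mul_neg_of_pos_of_neg h p]
  have hz : ∀ i j, d i j * e i j = 0 := by
    intro i j
    have h1 := (Finset.sum_eq_zero_iff_of_nonpos
      (fun i _ => Finset.sum_nonpos fun j _ => hle i j)).mp htr' i (Finset.mem_univ _)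
    exact (Finset.sum_eq_zero_iff_of_nonpos (fun j _ => hle i j)).mp h1 j (Finset.mem_univ _)
  have back : ∀ M : Matrix (Fin n) (Fin n) ℝ, Uᵀ * M * U = 0 → M = 0 := by
    intro M hM
    have : M = (U * Uᵀ) * M * (U * Uᵀ) := by rw [hU']; simp
    rw [this]
    calc (U * Uᵀ) * M * (U * Uᵀ) = U * (Uᵀ * M * U) * Uᵀ := by simp only [Matrix.mul_assoc]
      _ = 0 := by rw [hM]; simp
  constructor
  · apply back
    rw [hdS]
    ext i j
    rw [Matrix.mul_diagonal, Matrix.zero_apply]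
    have h1 := hent i j
    rcases mul_eq_zero.mp (hz i j) with h0 | h0
    · rw [h0, zero_mul]
    · rw [h0, mul_zero, add_zero] at h1
      rcases mul_eq_zero.mp h1 with h2 | h2
      · have : s j = 0 := by linarith [hs i, hs j]
        rw [this, mul_zero]
      · rw [h2, zero_mul]
  · apply back
    rw [heX]
    ext i j
    rw [Matrix.mul_diagonal, Matrix.zero_apply]
    have h1 := hent i j
    rcases mul_eq_zero.mp (hz i j) with h0 | h0
    · rw [h0, mul_zero, zero_add] at h1
      rcases mul_eq_zero.mp h1 with h2 | h2
      · have : x j = 0 := by linarith [hx i, hx j]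
        rw [this, mul_zero]
      · rw [h2, zero_mul]
    · rw [h0, zero_mul]

theorem isOpen_quad : IsOpen {M : Matrix (Fin n) (Fin n) ℝ | ∀ z : Fin n → ℝ, z ≠ 0 →
    0 < z ⬝ᵥ (M *ᵥ z)} := by
  have hset : {M : Matrix (Fin n) (Fin n) ℝ | ∀ z : Fin n → ℝ, z ≠ 0 → 0 < z ⬝ᵥ (M *ᵥ z)} =
      {M | ∀ z ∈ Metric.sphere (0 : Fin n → ℝ) 1, 0 < z ⬝ᵥ (M *ᵥ z)} := by
    ext M
    constructor
    · intro h z hz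
      apply h
      rintro rfl
      simp at hz
    · intro h z hz
      have hn : 0 < ‖z‖ := norm_pos_iff.mpr hz
      have h1 := h (‖z‖⁻¹ • z) (by simp [norm_smul, hn.ne'])
      rw [Matrix.mulVec_smul, smul_dotProduct, dotProduct_smul, smul_eq_mul, smul_eq_mul] at h1
      by_contra hc
      push Not at hc
      have : 0 < ‖z‖⁻¹ := inv_pos.mpr hn
      nlinarith [mul_pos this this]
  rw [hset, isOpen_iff_mem_nhds]
  intro M hM
  refine (isCompact_sphere (0 : Fin n → ℝ) 1).eventually_forall_of_forall_eventually
    (P := fun M z => 0 < z ⬝ᵥ (M *ᵥ z)) ?_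
  intro z hz
  have hc : Continuous fun p : Matrix (Fin n) (Fin n) ℝ × (Fin n → ℝ) => p.2 ⬝ᵥ (p.1 *ᵥ p.2) := by
    fun_prop
  exact hc.continuousAt.eventually (lt_mem_nhds (hM z hz))

theorem posDef_of_quad {M : Matrix (Fin n) (Fin n) ℝ} (hM : M.IsSymm)
    (h : ∀ z : Fin n → ℝ, z ≠ 0 → 0 < z ⬝ᵥ (M *ᵥ z)) : M.PosDef :=
  Matrix.PosDef.of_dotProduct_mulVec_pos (herm_of_symm hM) fun {z} hz => by simpa using h z hz

theorem quad_of_posDef {M : Matrix (Fin n) (Fin n) ℝ} (hM : M.PosDef) (z : Fin n → ℝ)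
    (hz : z ≠ 0) : 0 < z ⬝ᵥ (M *ᵥ z) := by
  simpa using hM.dotProduct_mulVec_pos hz

theorem trace_symmetrize {C X : Matrix (Fin n) (Fin n) ℝ} (hC : C.IsSymm) :
    (C * ((1 / 2 : ℝ) • (X + Xᵀ))).trace = (C * X).trace := by
  have : (C * Xᵀ).trace = (C * X).trace := by
    rw [← Matrix.trace_transpose, Matrix.transpose_mul, Matrix.transpose_transpose, hC.eq,
      Matrix.trace_mul_comm]
  rw [Matrix.mul_smul, Matrix.mul_add, Matrix.trace_smul, Matrix.trace_add, this, smul_eq_mul]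
  ring

/-- strong duality under a primal Slater point -/
theorem strong_duality {C : Matrix (Fin n) (Fin n) ℝ} {A : Fin m → Matrix (Fin n) (Fin n) ℝ}
    {b : Fin m → ℝ} (hC : C.IsSymm) (hA : ∀ i, (A i).IsSymm)
    {X0 : Matrix (Fin n) (Fin n) ℝ} (hX0 : PrimalFeasible A b X0) (hX0' : X0.PosDef) {v : ℝ}
    (hopt : ∀ X', PrimalFeasible A b X' → v ≤ (C * X').trace) :
    ∃ y : Fin m → ℝ, (C - ∑ i, y i • A i).PosSemidef ∧ v ≤ ∑ i, b i * y i := by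
  let D : Set (Matrix (Fin n) (Fin n) ℝ) := {M | ∀ z : Fin n → ℝ, z ≠ 0 → 0 < z ⬝ᵥ (M *ᵥ z)}
  have hDo : IsOpen D := isOpen_quad
  have hDadd : ∀ M ∈ D, ∀ N ∈ D, ∀ a c : ℝ, 0 ≤ a → 0 ≤ c → a + c = 1 → a • M + c • N ∈ D := by
    intro M hM N hN a c ha hc hac z hz
    rw [Matrix.add_mulVec, dotProduct_add, Matrix.smul_mulVec, Matrix.smul_mulVec,
      dotProduct_smul, dotProduct_smul, smul_eq_mul, smul_eq_mul]
    have h1 := hM z hz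
    have h2 := hN z hz
    rcases ha.eq_or_lt with h | h
    · subst h
      have : c = 1 := by linarith
      subst this
      linarith
    · have := mul_pos h h1
      have := mul_nonneg hc h2.le
      linarith
  let O : Set (Matrix (Fin n) (Fin n) ℝ × ℝ) := {p | p.1 ∈ D ∧ (C * p.1).trace < p.2}
  let L : Set (Matrix (Fin n) (Fin n) ℝ × ℝ) := {p | (∀ i, ((A i) * p.1).trace = b i) ∧ p.2 = v}
  have hOo : IsOpen O := by
    refine (hDo.preimage continuous_fst).inter (isOpen_lt ?_ continuous_snd)
    fun_prop
  have hOc : Convex ℝ O := by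
    rintro ⟨M, s⟩ ⟨hM, hs⟩ ⟨N, t⟩ ⟨hN, ht⟩ a c ha hc hac
    refine ⟨hDadd M hM N hN a c ha hc hac, ?_⟩
    simp only [Prod.smul_mk, Prod.mk_add_mk, smul_eq_mul, Matrix.mul_add, Matrix.mul_smul,
      Matrix.trace_add, Matrix.trace_smul]
    simp only at hs ht
    rcases ha.eq_or_lt with h | h
    · subst h
      have : c = 1 := by linarith
      subst this
      linarith
    · have := mul_lt_mul_of_pos_left hs h
      have := mul_le_mul_of_nonneg_left ht.le hc
      linarith
  have hLc : Convex ℝ L := by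
    rintro ⟨M, s⟩ ⟨hM, hs⟩ ⟨N, t⟩ ⟨hN, ht⟩ a c ha hc hac
    simp only at hM hN hs ht
    refine ⟨fun i => ?_, ?_⟩
    · simp only [Prod.smul_mk, Prod.mk_add_mk, smul_eq_mul, Matrix.mul_add, Matrix.mul_smul,
        Matrix.trace_add, Matrix.trace_smul, hM, hN]
      rw [← add_mul, hac, one_mul]
    · simp only [Prod.smul_mk, Prod.mk_add_mk, smul_eq_mul, hs, ht]
      rw [← add_mul, hac, one_mul]
  have hdisj : Disjoint O L := by
    rw [Set.disjoint_left]
    rintro ⟨M, s⟩ ⟨hM, hs⟩ ⟨hM', hs'⟩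
    simp only at hM hs hM' hs'
    have hsy : ((1 / 2 : ℝ) • (M + Mᵀ)).IsSymm := by
      rw [Matrix.IsSymm, Matrix.transpose_smul, Matrix.transpose_add, Matrix.transpose_transpose,
        add_comm]
    have hq : ((1 / 2 : ℝ) • (M + Mᵀ)).PosDef := by
      apply posDef_of_quad hsy
      intro z hz
      have h1 := hM z hz
      have h2 : z ⬝ᵥ (Mᵀ *ᵥ z) = z ⬝ᵥ (M *ᵥ z) := by
        rw [Matrix.dotProduct_mulVec, Matrix.vecMul_transpose, dotProduct_comm]
      rw [Matrix.smul_mulVec, Matrix.add_mulVec, dotProduct_smul, dotProduct_add, h2, smul_eq_mul]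
      linarith
    have := hopt _ ⟨hsy, fun i => by rw [trace_symmetrize (hA i), hM' i], hq.posSemidef⟩
    rw [trace_symmetrize hC] at this
    linarith
  obtain ⟨f, u, hf1, hf2⟩ := geometric_hahn_banach_open hOc hOo hLc hdisj
  let φ : Matrix (Fin n) (Fin n) ℝ →ₗ[ℝ] ℝ := f.toLinearMap ∘ₗ LinearMap.inl ℝ _ _
  let Lf : Fin m → Matrix (Fin n) (Fin n) ℝ →ₗ[ℝ] ℝ := fun i =>
    Matrix.traceLinearMap (Fin n) ℝ ℝ ∘ₗ LinearMap.mulLeft ℝ (A i)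
  set τ := f (0, 1) with hτ
  have hfe : ∀ X s, f (X, s) = φ X + s * τ := by
    intro X s
    have : (X, s) = (X, (0 : ℝ)) + s • ((0 : Matrix (Fin n) (Fin n) ℝ), (1 : ℝ)) := by simp
    rw [this, map_add, map_smul]
    rfl
  have hφ : φ ∈ Submodule.span ℝ (Set.range Lf) := by
    apply mem_span_of_iInf_ker_le_ker
    intro M hM
    have hM' : ∀ i, (A i * M).trace = 0 := by
      intro i
      have := (Submodule.mem_iInf _).mp hM i
      simpa [Lf] using this
    rw [LinearMap.mem_ker]
    have hk : ∀ k : ℝ, u ≤ φ X0 + k * φ M + v * τ := by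
      intro k
      have := hf2 (X0 + k • M, v) ⟨fun i => by
        simp only [Matrix.mul_add, Matrix.mul_smul, Matrix.trace_add, Matrix.trace_smul, hM' i,
          hX0.2.1 i]; simp, rfl⟩
      rw [hfe, map_add, map_smul, smul_eq_mul] at this
      exact this
    by_contra hne
    have := hk ((u - 1 - φ X0 - v * τ) / φ M)
    rw [div_mul_cancel₀ _ hne] at this
    linarith
  obtain ⟨c, hc⟩ := (Submodule.mem_span_range_iff_exists_fun ℝ).mp hφ
  have hφe : ∀ X, φ X = ∑ i, c i * (A i * X).trace := by
    intro X
    rw [← hc]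
    simp [Lf]
  have hu : u ≤ ∑ i, c i * b i + v * τ := by
    have := hf2 (X0, v) ⟨hX0.2.1, rfl⟩
    rw [hfe, hφe] at this
    simpa [hX0.2.1] using this
  have hmain : ∀ X ∈ D, ∀ s, (C * X).trace < s →
      ∑ i, c i * (A i * X).trace + s * τ < ∑ i, c i * b i + v * τ := by
    intro X hX s hs
    have := hf1 (X, s) ⟨hX, hs⟩
    rw [hfe, hφe] at this
    linarith
  have hX0D : X0 ∈ D := quad_of_posDef hX0'
  have hτneg : τ < 0 := by
    have := hmain X0 hX0D (max ((C * X0).trace) v + 1)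
      (lt_of_le_of_lt (le_max_left _ _) (by linarith))
    simp only [hX0.2.1] at this
    have h2 : v < max ((C * X0).trace) v + 1 := lt_of_le_of_lt (le_max_right _ _) (by linarith)
    nlinarith
  let y : Fin m → ℝ := fun i => c i / (-τ)
  have hy : ∀ i, c i = -τ * y i := by
    intro i
    have hne : τ ≠ 0 := hτneg.ne
    simp only [y]
    field_simp
  have htrS : ∀ X, ((C - ∑ i, y i • A i) * X).trace =
      (C * X).trace - ∑ i, y i * (A i * X).trace := by
    intro X
    rw [Matrix.sub_mul, Matrix.trace_sub, Finset.sum_mul, Matrix.trace_sum]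
    simp [Matrix.trace_smul]
  have hS : ∀ X ∈ D, v - ∑ i, b i * y i ≤ ((C - ∑ i, y i • A i) * X).trace := by
    intro X hX
    rw [htrS]
    by_contra hcon
    push Not at hcon
    have h1 := hmain X hX (v - ∑ i, b i * y i + ∑ i, y i * (A i * X).trace) (by linarith)
    have e1 : ∑ i, c i * (A i * X).trace = -τ * ∑ i, y i * (A i * X).trace := by
      rw [Finset.mul_sum]
      exact Finset.sum_congr rfl fun i _ => by rw [hy i]; ring
    have e2 : ∑ i, c i * b i = -τ * ∑ i, b i * y i := by
      rw [Finset.mul_sum]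
      exact Finset.sum_congr rfl fun i _ => by rw [hy i]; ring
    rw [e1, e2] at h1
    nlinarith
  have hDsmul : ∀ X ∈ D, ∀ k : ℝ, 0 < k → k • X ∈ D := by
    intro X hX k hk z hz
    rw [Matrix.smul_mulVec, dotProduct_smul, smul_eq_mul]
    exact mul_pos hk (hX z hz)
  have hS' : ∀ X ∈ D, ∀ k : ℝ, 0 < k →
      v - ∑ i, b i * y i ≤ k * ((C - ∑ i, y i • A i) * X).trace := by
    intro X hX k hk
    have := hS _ (hDsmul X hX k hk)
    rwa [Matrix.mul_smul, Matrix.trace_smul, smul_eq_mul] at this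
  refine ⟨y, ?_, ?_⟩
  · apply Matrix.PosSemidef.of_dotProduct_mulVec_nonneg
    · apply herm_of_symm
      rw [Matrix.IsSymm, Matrix.transpose_sub, Matrix.transpose_sum, hC.eq]
      simp only [Matrix.transpose_smul, (hA _).eq]
    · intro z
      rw [star_trivial]
      have hnn : ∀ X ∈ D, 0 ≤ ((C - ∑ i, y i • A i) * X).trace := by
        intro X hX
        by_contra hneg
        push Not at hneg
        set t := ((C - ∑ i, y i • A i) * X).trace
        set r := v - ∑ i, b i * y i
        have hk : 0 < (|r| + 1) / (-t) := div_pos (by positivity) (by linarith)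
        have := hS' X hX _ hk
        have hne : t ≠ 0 := hneg.ne
        have e : (|r| + 1) / (-t) * t = -(|r| + 1) := by field_simp
        change r ≤ (|r| + 1) / (-t) * t at this
        rw [e] at this
        have := neg_abs_le r
        linarith
      have hzz : ∀ δ : ℝ, 0 < δ →
          vecMulVec z z + δ • (1 : Matrix (Fin n) (Fin n) ℝ) ∈ D := by
        intro δ hδ w hw
        have h1 : w ⬝ᵥ (vecMulVec z z *ᵥ w) = (w ⬝ᵥ z) * (z ⬝ᵥ w) := by
          rw [Matrix.vecMulVec_mulVec]
          simp [mul_comm]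
        have h2 : 0 < w ⬝ᵥ w := by
          by_contra hc
          push Not at hc
          exact hw (dot_self_eq_zero hc)
        rw [Matrix.add_mulVec, dotProduct_add, h1, Matrix.smul_mulVec, Matrix.one_mulVec,
          dotProduct_smul, smul_eq_mul, dotProduct_comm z w]
        nlinarith [mul_self_nonneg (w ⬝ᵥ z), mul_pos hδ h2]
      have hd : ∀ δ : ℝ, 0 < δ → 0 ≤ z ⬝ᵥ ((C - ∑ i, y i • A i) *ᵥ z) +
          δ * (C - ∑ i, y i • A i).trace := by
        intro δ hδ
        have := hnn _ (hzz δ hδ)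
        rw [Matrix.mul_add, Matrix.trace_add, Matrix.mul_vecMulVec, Matrix.trace_vecMulVec,
          Matrix.mul_smul, Matrix.mul_one, Matrix.trace_smul, smul_eq_mul, dotProduct_comm] at this
        exact this
      by_contra hneg
      push Not at hneg
      set q := z ⬝ᵥ ((C - ∑ i, y i • A i) *ᵥ z)
      set t := (C - ∑ i, y i • A i).trace
      have h3 := hd (-q / (2 * (|t| + 1))) (div_pos (by linarith) (by positivity))
      have h4 : -q / (2 * (|t| + 1)) * t ≤ -q / 2 := by
        rw [div_mul_eq_mul_div, div_le_iff₀ (by positivity)]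
        nlinarith [le_abs_self t, abs_nonneg t]
      linarith
  · by_contra hneg
    push Not at hneg
    set t := ((C - ∑ i, y i • A i) * X0).trace with ht
    set r := v - ∑ i, b i * y i with hr
    have hr0 : 0 < r := by linarith
    have h3 := hS' X0 hX0D (r / (2 * (|t| + 1))) (by positivity)
    have h4 : r / (2 * (|t| + 1)) * t ≤ r / 2 := by
      rw [div_mul_eq_mul_div, div_le_iff₀ (by positivity)]
      nlinarith [le_abs_self t, abs_nonneg t]
    change r ≤ r / (2 * (|t| + 1)) * t at h3
    linarith

theorem gap {C Cbar : Matrix (Fin n) (Fin n) ℝ} {A : Fin m → Matrix (Fin n) (Fin n) ℝ}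
    {b : Fin m → ℝ} {ε : ℝ} {X S : Matrix (Fin n) (Fin n) ℝ} {y : Fin m → ℝ}
    (hX : PrimalFeasible A b X) (hS : DualFeasible C Cbar A ε y S) :
    ((C + ε • Cbar) * X).trace = ∑ i, b i * y i + (X * S).trace := by
  rw [← hS.2.1, Matrix.add_mul, Matrix.trace_add, Finset.sum_mul, Matrix.trace_sum,
    Matrix.trace_mul_comm S]
  congr 1
  refine Finset.sum_congr rfl fun i _ => ?_
  rw [Matrix.smul_mul, Matrix.trace_smul, hX.2.1 i, smul_eq_mul, mul_comm]

theorem optimal_of_compl {C Cbar : Matrix (Fin n) (Fin n) ℝ}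
    {A : Fin m → Matrix (Fin n) (Fin n) ℝ}
    {b : Fin m → ℝ} {ε : ℝ} {X S : Matrix (Fin n) (Fin n) ℝ} {y : Fin m → ℝ}
    (hX : PrimalFeasible A b X) (hS : DualFeasible C Cbar A ε y S) (h : X * S = 0) :
    X ∈ PrimalOpt C Cbar A b ε ∧ (y, S) ∈ DualOpt C Cbar A b ε := by
  have g := gap hX hS
  rw [h, Matrix.trace_zero, add_zero] at g
  refine ⟨⟨hX, fun X' hX' => ?_⟩, ⟨hS, fun y' S' hS' => ?_⟩⟩
  · rw [g, gap hX' hS]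
    linarith [(trace_mul_psd hX'.2.2 hS.2.2).1]
  · have := gap hX hS'
    rw [g] at this
    change _ ≤ ∑ i, b i * y i
    linarith [(trace_mul_psd hX.2.2 hS'.2.2).1]

/-- all optimal pairs are complementary as soon as one complementary pair exists -/
theorem compl_of_optimal {C Cbar : Matrix (Fin n) (Fin n) ℝ}
    {A : Fin m → Matrix (Fin n) (Fin n) ℝ}
    {b : Fin m → ℝ} {ε : ℝ} {X S : Matrix (Fin n) (Fin n) ℝ} {y : Fin m → ℝ}
    (hX : PrimalFeasible A b X) (hS : DualFeasible C Cbar A ε y S)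
    (h : ((C + ε • Cbar) * X).trace ≤ ∑ i, b i * y i) : X * S = 0 := by
  have g := gap hX hS
  have k := trace_mul_psd hX.2.2 hS.2.2
  exact k.2 (by linarith [k.1])

theorem rank_add {X S : Matrix (Fin n) (Fin n) ℝ} (h : X * S = 0) (hpd : (X + S).PosDef) :
    X.rank + S.rank = n := by
  apply le_antisymm
  · have := Matrix.rank_add_rank_le_card_of_mul_eq_zero h
    simpa using this
  · have h1 : (X + S).rank ≤ X.rank + S.rank := by
      have hle : LinearMap.range (X + S).mulVecLin ≤
          LinearMap.range X.mulVecLin ⊔ LinearMap.range S.mulVecLin := by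
        rintro _ ⟨v, rfl⟩
        rw [Matrix.mulVecLin_add, LinearMap.add_apply]
        exact Submodule.add_mem_sup ⟨v, rfl⟩ ⟨v, rfl⟩
      exact (Submodule.finrank_mono hle).trans (Submodule.finrank_add_le_finrank_add_finrank _ _)
    rw [Matrix.rank_of_isUnit _ hpd.isUnit] at h1
    simpa using h1

theorem rank_lsc (X : Matrix (Fin n) (Fin n) ℝ) : ∀ᶠ Y in 𝓝 X, X.rank ≤ Y.rank := by
  have h1 := isOpen_setOfPred_nat_le_rank (𝕜 := ℝ) (E := Fin n → ℝ) (F := Fin n → ℝ) X.rank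
  let T : Matrix (Fin n) (Fin n) ℝ →ₗ[ℝ] ((Fin n → ℝ) →L[ℝ] (Fin n → ℝ)) :=
    LinearMap.toContinuousLinearMap.toLinearMap ∘ₗ (Matrix.toLin' (R := ℝ)).toLinearMap
  have hT : Continuous T := T.continuous_of_finiteDimensional
  have e : ∀ Y, (X.rank : Cardinal) ≤ ((T Y : (Fin n → ℝ) →L[ℝ] (Fin n → ℝ)) :
      (Fin n → ℝ) →ₗ[ℝ] (Fin n → ℝ)).rank ↔ X.rank ≤ Y.rank := by
    intro Y
    have : ((T Y : (Fin n → ℝ) →L[ℝ] (Fin n → ℝ)) :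
      (Fin n → ℝ) →ₗ[ℝ] (Fin n → ℝ)) = Y.mulVecLin := rfl
    rw [this, LinearMap.rank, ← Module.finrank_eq_rank]
    exact Nat.cast_le
  have h2 := (h1.preimage hT).mem_nhds (x := X) ((e X).mpr le_rfl)
  filter_upwards [h2] with Y hY
  exact (e Y).mp hY

theorem exists_small {P : ℝ → Prop} (h : ∀ᶠ t in 𝓝 (0 : ℝ), P t) : ∃ t : ℝ, t ≠ 0 ∧ P t := by
  have h1 : ∀ᶠ t in 𝓝[≠] (0 : ℝ), P t := h.filter_mono nhdsWithin_le_nhds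
  obtain ⟨t, ht, hne⟩ := (h1.and self_mem_nhdsWithin).exists
  exact ⟨t, hne, ht⟩

theorem local_inverse {E : Type*} [NormedAddCommGroup E] [NormedSpace ℝ E]
    [FiniteDimensional ℝ E] (Lin : E →ₗ[ℝ] E) (B : E →ₗ[ℝ] E →ₗ[ℝ] E) (w0 : E)
    (hinj : ∀ d, Lin d + B w0 d + B d w0 = 0 → d = 0) :
    ∃ g : E → E, ContDiffAt ℝ 1 g (Lin w0 + B w0 w0) ∧ g (Lin w0 + B w0 w0) = w0 ∧
      (∀ᶠ p in 𝓝 (Lin w0 + B w0 w0), Lin (g p) + B (g p) (g p) = p) ∧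
      ∃ O : Set E, IsOpen O ∧ w0 ∈ O ∧ Set.InjOn (fun w => Lin w + B w w) O := by
  haveI : CompleteSpace E := FiniteDimensional.complete ℝ E
  let Lc := LinearMap.toContinuousLinearMap Lin
  let Bc := B.toContinuousBilinearMap
  let H : E → E := fun w => Lc w + Bc w w
  have hcd : ContDiffAt ℝ 1 H w0 := by
    have h1 : ContDiff ℝ 1 fun w : E => Bc w w :=
      Bc.isBoundedBilinearMap.contDiff.comp (contDiff_id.prodMk contDiff_id)
    exact (Lc.contDiff.add h1).contDiffAt
  let dL : E →ₗ[ℝ] E := Lin + B w0 + B.flip w0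
  have hdL : Function.Injective dL := by
    rw [← LinearMap.ker_eq_bot, LinearMap.ker_eq_bot']
    intro d hd
    exact hinj d (by simpa [dL] using hd)
  let e : E ≃L[ℝ] E := (LinearEquiv.ofInjectiveEndo dL hdL).toContinuousLinearEquiv
  have hd : HasFDerivAt H (e : E →L[ℝ] E) w0 := by
    have h1 := Lc.hasFDerivAt (x := w0)
    have h2 := Bc.hasFDerivAt_of_bilinear (hasFDerivAt_id w0) (hasFDerivAt_id w0)
    have h3 := h1.add h2
    refine h3.congr_fderiv ?_
    ext d
    simp [Lc, Bc, e, dL, add_assoc]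
  have hst := hcd.hasStrictFDerivAt' hd one_ne_zero
  refine ⟨hcd.localInverse hd one_ne_zero, hcd.to_localInverse hd one_ne_zero,
    hcd.localInverse_apply_image hd one_ne_zero, hst.eventually_right_inverse,
    (hcd.toOpenPartialHomeomorph H hd one_ne_zero).source,
    (hcd.toOpenPartialHomeomorph H hd one_ne_zero).open_source,
    hcd.mem_toOpenPartialHomeomorph_source hd one_ne_zero,
    (hcd.toOpenPartialHomeomorph H hd one_ne_zero).injOn⟩

abbrev W (n m : ℕ) := Matrix (Fin n) (Fin n) ℝ × (Fin m → ℝ) × Matrix (Fin n) (Fin n) ℝ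

/-- the bilinear part of the optimality system -/
noncomputable def bil : W n m →ₗ[ℝ] W n m →ₗ[ℝ] W n m :=
  LinearMap.mk₂ ℝ (fun w w' => ((w.1 * w'.2.2 + w.2.2 * w'.1) + (w.1 * w'.2.2 + w.2.2 * w'.1)ᵀ,
      0, 0))
    (by intro a b c; simp [Matrix.add_mul]; abel)
    (by intro r a b; simp [smul_add])
    (by intro a b c; simp [Matrix.mul_add]; abel)
    (by intro r a b; simp [smul_add])

/-- the linear part of the optimality system -/
noncomputable def lin (A : Fin m → Matrix (Fin n) (Fin n) ℝ) : W n m →ₗ[ℝ] W n m where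
  toFun w := (w.1 - w.1ᵀ, fun i => (A i * w.1).trace, (∑ i, w.2.1 i • A i) + w.2.2)
  map_add' a b := by
    simp only [Prod.fst_add, Prod.snd_add, Matrix.transpose_add, Matrix.mul_add, Matrix.trace_add,
      Pi.add_apply, add_smul, Finset.sum_add_distrib, Prod.mk_add_mk]
    refine Prod.ext ?_ (Prod.ext ?_ ?_)
    · simp only; abel
    · rfl
    · simp only; abel
  map_smul' r a := by
    simp only [Prod.smul_fst, Prod.smul_snd, Matrix.transpose_smul, Matrix.mul_smul,
      Matrix.trace_smul, Pi.smul_apply, smul_assoc, RingHom.id_apply, Prod.smul_mk, smul_sub,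
      smul_add, Finset.smul_sum]
    rfl

theorem symm_split {D P : Matrix (Fin n) (Fin n) ℝ} (h : D - Dᵀ + (P + Pᵀ) = 0) :
    D.IsSymm ∧ P + Pᵀ = 0 := by
  have h' := congrArg Matrix.transpose h
  simp only [Matrix.transpose_add, Matrix.transpose_sub, Matrix.transpose_transpose,
    Matrix.transpose_zero] at h'
  have h1 : D.IsSymm := by
    ext i j
    have e1 := congrFun (congrFun h i) j
    have e2 := congrFun (congrFun h' i) j
    simp only [Matrix.add_apply, Matrix.sub_apply, Matrix.transpose_apply, Matrix.zero_apply]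
      at e1 e2
    rw [Matrix.transpose_apply]
    linarith
  refine ⟨h1, ?_⟩
  rw [h1.eq, sub_self, zero_add] at h
  exact h

theorem half_zero {P : Matrix (Fin n) (Fin n) ℝ} (h : P + Pᵀ = 0) (hs : P.IsSymm) : P = 0 := by
  rw [hs.eq] at h
  ext i j
  have := congrFun (congrFun h i) j
  simp only [Matrix.add_apply, Matrix.zero_apply] at this
  rw [Matrix.zero_apply]
  linarith

theorem sum_symm {A : Fin m → Matrix (Fin n) (Fin n) ℝ} (hA : ∀ i, (A i).IsSymm)
    (y : Fin m → ℝ) : (∑ i, y i • A i).IsSymm := by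
  rw [Matrix.IsSymm, Matrix.transpose_sum]
  simp only [Matrix.transpose_smul, (hA _).eq]

theorem mul_comm_zero {X S : Matrix (Fin n) (Fin n) ℝ} (hX : X.IsSymm) (hS : S.IsSymm)
    (h : X * S = 0) : S * X = 0 := by
  have := congrArg Matrix.transpose h
  rwa [Matrix.transpose_mul, hX.eq, hS.eq, Matrix.transpose_zero] at this

theorem quad_small {M : Matrix (Fin n) (Fin n) ℝ} (hM : M.PosDef) (hs : M.IsSymm)
    {D : Matrix (Fin n) (Fin n) ℝ} (hD : D.IsSymm) :
    ∃ t : ℝ, t ≠ 0 ∧ (M + t • D).PosDef := by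
  have hc : Continuous fun t : ℝ => M + t • D := by fun_prop
  have h1 : ∀ᶠ t in 𝓝 (0 : ℝ), (M + t • D) ∈
      {M : Matrix (Fin n) (Fin n) ℝ | ∀ z : Fin n → ℝ, z ≠ 0 → 0 < z ⬝ᵥ (M *ᵥ z)} := by
    apply hc.continuousAt.eventually
    apply isOpen_quad.mem_nhds
    simpa using quad_of_posDef hM
  obtain ⟨t, ht, h⟩ := exists_small h1
  refine ⟨t, ht, posDef_of_quad ?_ h⟩
  rw [Matrix.IsSymm, Matrix.transpose_add, Matrix.transpose_smul, hs.eq, hD.eq]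

/-- injectivity of the Jacobian at the unique strictly complementary solution -/
theorem jac_inj {C Cbar : Matrix (Fin n) (Fin n) ℝ}
    {A : Fin m → Matrix (Fin n) (Fin n) ℝ} {b : Fin m → ℝ} (hA : ∀ i, (A i).IsSymm)
    {ε : ℝ} {X S : Matrix (Fin n) (Fin n) ℝ} {y : Fin m → ℝ}
    (hP : PrimalOpt C Cbar A b ε = {X}) (hD : DualOpt C Cbar A b ε = {(y, S)})
    (hpd : (X + S).PosDef) (hXS : X * S = 0)
    (d : W n m) (hd : lin A d + bil (X, y, S) d + bil d (X, y, S) = 0) : d = 0 := by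
  have hXo : X ∈ PrimalOpt C Cbar A b ε := by rw [hP]; rfl
  have hSo : (y, S) ∈ DualOpt C Cbar A b ε := by rw [hD]; rfl
  obtain ⟨hXf, -⟩ := hXo
  obtain ⟨hSf, -⟩ := hSo
  obtain ⟨hXs, hXA, hXp⟩ := hXf
  obtain ⟨hSs, hSA, hSp⟩ := hSf
  simp only at hSs hSA hSp
  obtain ⟨DX, Dy, DS⟩ := d
  simp only [lin, bil, LinearMap.coe_mk, AddHom.coe_mk, LinearMap.mk₂_apply, Prod.mk_add_mk,
    add_zero, Prod.mk_eq_zero] at hd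
  obtain ⟨h1, h2, h3⟩ := hd
  have h1' : DX - DXᵀ + ((X * DS + S * DX + (DX * S + DS * X)) +
      (X * DS + S * DX + (DX * S + DS * X))ᵀ) = 0 := by
    rw [← h1, Matrix.transpose_add (X * DS + S * DX)]
    abel
  obtain ⟨hDX, hZ⟩ := symm_split h1'
  have hDSe : DS = -∑ i, Dy i • A i := by
    rw [eq_neg_iff_add_eq_zero, add_comm]; exact h3
  have hDS : DS.IsSymm := by
    rw [hDSe]
    exact (sum_symm hA Dy).neg
  have hZ0 := half_zero hZ (by
    simp only [Matrix.IsSymm, Matrix.transpose_add, Matrix.transpose_mul, hDX.eq, hDS.eq, hXs.eq,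
      hSs.eq]
    abel)
  have htrA : ∀ i, (A i * DX).trace = 0 := fun i => congrFun h2 i
  have htr : (DX * DS).trace = 0 := by
    rw [hDSe, Matrix.mul_neg, Matrix.trace_neg, Finset.mul_sum, Matrix.trace_sum, neg_eq_zero]
    refine Finset.sum_eq_zero fun i _ => ?_
    rw [Matrix.mul_smul, Matrix.trace_smul, Matrix.trace_mul_comm, htrA, smul_zero]
  obtain ⟨k1, k2⟩ := kernel_aux hXp hSp hXS hpd hDS htr (by rw [← hZ0]; abel)
  have hSX := mul_comm_zero hXs hSs hXS
  have hsum : (X + S).IsSymm := hXs.add hSs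
  have hDX0 : DX = 0 := by
    obtain ⟨t, ht, hq⟩ := quad_small hpd hsum hDX
    have hsy : (X + t • DX).IsSymm := hXs.add (hDX.smul t)
    have hmul : (X + t • DX) * S = 0 := by
      rw [Matrix.add_mul, Matrix.smul_mul, hXS, k1]; simp
    have hmul' := mul_comm_zero hsy hSs hmul
    have hpsd : (X + t • DX).PosSemidef := by
      apply psd_of_anticomm hsy (S := S) (by rw [hmul, hmul', add_zero])
      convert hq using 1
      abel
    have hopt := (optimal_of_compl (C := C) (Cbar := Cbar) (ε := ε) (y := y) (S := S)
      (A := A) (b := b) ⟨hsy, fun i => by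
        rw [Matrix.mul_add, Matrix.mul_smul, Matrix.trace_add, Matrix.trace_smul, htrA, hXA,
          smul_zero, add_zero], hpsd⟩ ⟨hSs, hSA, hSp⟩ hmul).1
    rw [hP, Set.mem_singleton_iff, add_eq_left] at hopt
    exact (smul_eq_zero.mp hopt).resolve_left ht
  have hDyS : Dy = 0 ∧ DS = 0 := by
    obtain ⟨t, ht, hq⟩ := quad_small hpd hsum hDS
    have hsy : (S + t • DS).IsSymm := hSs.add (hDS.smul t)
    have hmul : (S + t • DS) * X = 0 := by
      rw [Matrix.add_mul, Matrix.smul_mul, hSX, k2]; simp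
    have hmul' := mul_comm_zero hsy hXs hmul
    have hpsd : (S + t • DS).PosSemidef := by
      apply psd_of_anticomm hsy (S := X) (by rw [hmul, hmul', add_zero])
      convert hq using 1
      abel
    have hopt := (optimal_of_compl (C := C) (Cbar := Cbar) (ε := ε) (y := y + t • Dy)
      (S := S + t • DS) (A := A) (b := b) ⟨hXs, hXA, hXp⟩ ⟨hsy, by
        have : ∑ i, (y + t • Dy) i • A i = ∑ i, y i • A i + t • ∑ i, Dy i • A i := by
          rw [Finset.smul_sum, ← Finset.sum_add_distrib]
          refine Finset.sum_congr rfl fun i _ => ?_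
          rw [Pi.add_apply, Pi.smul_apply, add_smul, smul_assoc]
        rw [this, ← hSA, hDSe, smul_neg]
        abel, hpsd⟩ hmul').2
    rw [hD, Set.mem_singleton_iff, Prod.mk.injEq, add_eq_left, add_eq_left] at hopt
    exact ⟨(smul_eq_zero.mp hopt.1).resolve_left ht, (smul_eq_zero.mp hopt.2).resolve_left ht⟩
  rw [hDX0, hDyS.1, hDyS.2]
  rfl

/-- a solution of the optimality system with positive definite sum is a complementary pair -/
theorem good_point {C Cbar : Matrix (Fin n) (Fin n) ℝ}
    {A : Fin m → Matrix (Fin n) (Fin n) ℝ} {b : Fin m → ℝ} (hC : C.IsSymm) (hCb : Cbar.IsSymm)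
    (hA : ∀ i, (A i).IsSymm)
    {ε : ℝ} {w : W n m} (hw : lin A w + bil w w = (0, b, C + ε • Cbar))
    (hq : ∀ z : Fin n → ℝ, z ≠ 0 → 0 < z ⬝ᵥ ((w.1 + w.2.2) *ᵥ z)) :
    PrimalFeasible A b w.1 ∧ DualFeasible C Cbar A ε w.2.1 w.2.2 ∧ w.1 * w.2.2 = 0 ∧
      (w.1 + w.2.2).PosDef := by
  obtain ⟨X, y, S⟩ := w
  simp only [lin, bil, LinearMap.coe_mk, AddHom.coe_mk, LinearMap.mk₂_apply, Prod.mk_add_mk,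
    add_zero, Prod.mk.injEq] at hw hq ⊢
  obtain ⟨h1, h2, h3⟩ := hw
  obtain ⟨hX, hZ⟩ := symm_split h1
  have hS : S.IsSymm := by
    have : S = C + ε • Cbar - ∑ i, y i • A i := by rw [← h3]; abel
    rw [this]
    exact (hC.add (hCb.smul ε)).sub (sum_symm hA y)
  have hZ0 := half_zero hZ (by
    simp only [Matrix.IsSymm, Matrix.transpose_add, Matrix.transpose_mul, hX.eq, hS.eq]
    abel)
  have hpd := posDef_of_quad (hX.add hS) hq
  have hXp := psd_of_anticomm hX hZ0 hpd
  have hSp := psd_of_anticomm hS (by rw [add_comm]; exact hZ0) (by rw [add_comm]; exact hpd)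
  refine ⟨⟨hX, fun i => congrFun h2 i, hXp⟩, ⟨hS, h3, hSp⟩, ?_, hpd⟩
  apply (trace_mul_psd hXp hSp).2
  have := congrArg Matrix.trace hZ0
  rw [Matrix.trace_add, Matrix.trace_mul_comm S X, Matrix.trace_zero] at this
  linarith

/-- uniqueness from local injectivity -/
theorem unique_of_inj {C Cbar : Matrix (Fin n) (Fin n) ℝ}
    {A : Fin m → Matrix (Fin n) (Fin n) ℝ} {b : Fin m → ℝ}
    {ε : ℝ} {X S : Matrix (Fin n) (Fin n) ℝ} {y : Fin m → ℝ}
    (hX : PrimalFeasible A b X) (hS : DualFeasible C Cbar A ε y S) (hXS : X * S = 0)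
    {O : Set (W n m)} (hO : IsOpen O) (hw : (X, y, S) ∈ O)
    (hinj : Set.InjOn (fun w => lin A w + bil w w) O) :
    PrimalOpt C Cbar A b ε = {X} ∧ DualOpt C Cbar A b ε = {(y, S)} := by
  have hopt := optimal_of_compl hX hS hXS
  have g := gap hX hS
  rw [hXS, Matrix.trace_zero, add_zero] at g
  have hSX := mul_comm_zero hX.1 hS.1 hXS
  have move : ∀ d : W n m, (∀ t : ℝ, lin A ((X, y, S) + t • d) +
      bil ((X, y, S) + t • d) ((X, y, S) + t • d) = lin A (X, y, S) +
      bil (X, y, S) (X, y, S)) → d = 0 := by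
    intro d hd
    have hc : Continuous fun t : ℝ => (X, y, S) + t • d := by fun_prop
    have h1 : ∀ᶠ t in 𝓝 (0 : ℝ), (X, y, S) + t • d ∈ O := by
      apply hc.continuousAt.eventually
      apply hO.mem_nhds
      simpa using hw
    obtain ⟨t, ht, h⟩ := exists_small h1
    have := hinj h hw (hd t)
    rw [add_eq_left] at this
    exact (smul_eq_zero.mp this).resolve_left ht
  constructor
  · refine Set.eq_singleton_iff_unique_mem.mpr ⟨hopt.1, fun X' hX' => ?_⟩
    have hc : X' * S = 0 := compl_of_optimal hX'.1 hS ((hX'.2 X hX).trans g.le)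
    have hc' := mul_comm_zero hX'.1.1 hS.1 hc
    have h0 := move (X' - X, 0, 0) (by
      intro t
      simp only [lin, bil, LinearMap.coe_mk, AddHom.coe_mk, LinearMap.mk₂_apply, Prod.mk_add_mk,
        Prod.smul_mk, smul_zero, add_zero]
      have e1 : (X + t • (X' - X)) * S = 0 := by
        rw [Matrix.add_mul, Matrix.smul_mul, Matrix.sub_mul, hc, hXS]; simp
      have e2 : S * (X + t • (X' - X)) = 0 := by
        rw [Matrix.mul_add, Matrix.mul_smul, Matrix.mul_sub, hc', hSX]; simp
      have e3 : (X + t • (X' - X))ᵀ = X + t • (X' - X) :=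
        hX.1.add ((hX'.1.1.sub hX.1).smul t)
      rw [e1, e2, e3, hX.1.eq, hXS, hSX, sub_self, sub_self]
      congr 2
      ext i
      rw [Matrix.mul_add, Matrix.mul_smul, Matrix.mul_sub, Matrix.trace_add, Matrix.trace_smul,
        Matrix.trace_sub, hX.2.1, hX'.1.2.1]
      simp)
    rw [Prod.mk_eq_zero] at h0
    exact sub_eq_zero.mp h0.1
  · refine Set.eq_singleton_iff_unique_mem.mpr ⟨hopt.2, ?_⟩
    rintro ⟨y', S'⟩ ⟨hS', hS'o⟩
    simp only at hS' hS'o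
    have hc : X * S' = 0 := compl_of_optimal hX hS' (g.le.trans (hS'o y S hS))
    have hc' := mul_comm_zero hX.1 hS'.1 hc
    have h0 := move (0, y' - y, S' - S) (by
      intro t
      simp only [lin, bil, LinearMap.coe_mk, AddHom.coe_mk, LinearMap.mk₂_apply, Prod.mk_add_mk,
        Prod.smul_mk, smul_zero, add_zero]
      have e1 : X * (S + t • (S' - S)) = 0 := by
        rw [Matrix.mul_add, Matrix.mul_smul, Matrix.mul_sub, hc, hXS]; simp
      have e2 : (S + t • (S' - S)) * X = 0 := by
        rw [Matrix.add_mul, Matrix.smul_mul, Matrix.sub_mul, hc', hSX]; simp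
      rw [e1, e2, hXS, hSX]
      congr 2
      have : ∑ i, (y + t • (y' - y)) i • A i =
          ∑ i, y i • A i + t • (∑ i, y' i • A i - ∑ i, y i • A i) := by
        rw [← Finset.sum_sub_distrib, Finset.smul_sum, ← Finset.sum_add_distrib]
        refine Finset.sum_congr rfl fun i _ => ?_
        rw [Pi.add_apply, Pi.smul_apply, Pi.sub_apply, add_smul, smul_assoc, sub_smul]
      have e : ∑ i, y' i • A i - ∑ i, y i • A i = - (S' - S) := by
        have a1 := hS'.2.1
        have a2 := hS.2.1
        rw [← a2] at a1
        rw [eq_sub_of_add_eq a1]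
        abel
      rw [this, e, smul_neg]
      abel)
    rw [Prod.mk_eq_zero, Prod.mk_eq_zero] at h0
    rw [sub_eq_zero.mp h0.2.1, sub_eq_zero.mp h0.2.2]

end Stmt19Aux

attribute [local instance] Matrix.frobeniusNormedAddCommGroup Matrix.frobeniusNormedSpace

/-- around a unique, strictly complementary optimal solution the optimal
solutions stay unique, vary continuously differentiably, remain strictly complementary,
the ranks are locally constant, and `ε̄` is not a transition point. -/
theorem stmt19 {n m : ℕ} (C Cbar : Matrix (Fin n) (Fin n) ℝ)
    (A : Fin m → Matrix (Fin n) (Fin n) ℝ) (b : Fin m → ℝ)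
    (hSA : StandingAssumptions C Cbar A b)
    (εbar : ℝ) (hεbar : εbar ∈ interior (Eset C Cbar A b))
    (Xs Ss : Matrix (Fin n) (Fin n) ℝ) (ys : Fin m → ℝ)
    (hPs : PrimalOpt C Cbar A b εbar = {Xs})
    (hDs : DualOpt C Cbar A b εbar = {(ys, Ss)})
    (hsc : (Xs + Ss).PosDef) :
    ∃ ξ : ℝ, 0 < ξ ∧ Set.Ioo (εbar - ξ) (εbar + ξ) ⊆ interior (Eset C Cbar A b) ∧
      ∃ (Xf : ℝ → Matrix (Fin n) (Fin n) ℝ) (yf : ℝ → Fin m → ℝ)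
          (Sf : ℝ → Matrix (Fin n) (Fin n) ℝ),
        (∀ ε ∈ Set.Ioo (εbar - ξ) (εbar + ξ),
          PrimalOpt C Cbar A b ε = {Xf ε} ∧ DualOpt C Cbar A b ε = {(yf ε, Sf ε)}) ∧
        ContDiffOn ℝ 1 (fun ε => (Xf ε, yf ε, Sf ε)) (Set.Ioo (εbar - ξ) (εbar + ξ)) ∧
        Xf εbar = Xs ∧ yf εbar = ys ∧ Sf εbar = Ss ∧
        (∀ ε ∈ Set.Ioo (εbar - ξ) (εbar + ξ),
          (Xf ε + Sf ε).PosDef ∧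
          Module.finrank ℝ (LinearMap.range (Xf ε).mulVecLin) =
            Module.finrank ℝ (LinearMap.range Xs.mulVecLin) ∧
          Module.finrank ℝ (LinearMap.range (Sf ε).mulVecLin) =
            Module.finrank ℝ (LinearMap.range Ss.mulVecLin)) ∧
        ¬ IsTransitionPoint C Cbar A b εbar := by
  obtain ⟨hC, hCb, hA, hAli, X0, y0, S0, hX0, hX0', hS0, hS0'⟩ := hSA
  have hXs : Xs ∈ PrimalOpt C Cbar A b εbar := by rw [hPs]; rfl
  have hSs : (ys, Ss) ∈ DualOpt C Cbar A b εbar := by rw [hDs]; rfl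
  have hXS : Xs * Ss = 0 := by
    have hCs : (C + εbar • Cbar).IsSymm := hC.add (hCb.smul εbar)
    obtain ⟨y, hy1, hy2⟩ := Stmt19Aux.strong_duality hCs hA hX0 hX0' hXs.2
    have hdf : DualFeasible C Cbar A εbar y (C + εbar • Cbar - ∑ i, y i • A i) :=
      ⟨Stmt19Aux.symm_of_herm hy1.1, by abel, hy1⟩
    exact Stmt19Aux.compl_of_optimal hXs.1 hSs.1 (hy2.trans (hSs.2 _ _ hdf))
  have hSX : Ss * Xs = 0 := Stmt19Aux.mul_comm_zero hXs.1.1 hSs.1.1 hXS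
  obtain ⟨hd1, hd2, hd3⟩ := hSs.1
  have hw0 : Stmt19Aux.lin A (Xs, ys, Ss) + Stmt19Aux.bil (Xs, ys, Ss) (Xs, ys, Ss) =
      (0, b, C + εbar • Cbar) := by
    have e1 : Xsᵀ = Xs := hXs.1.1
    have e2 : (fun i => (A i * Xs).trace) = b := funext hXs.1.2.1
    simp only [Stmt19Aux.lin, Stmt19Aux.bil, LinearMap.coe_mk, AddHom.coe_mk,
      LinearMap.mk₂_apply, Prod.mk_add_mk, add_zero, Prod.mk.injEq]
    refine ⟨?_, e2, hd2⟩
    rw [hXS, hSX, e1]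
    simp
  obtain ⟨g, hg1, hg2, hg3, O, hO, hwO, hinj⟩ :=
    Stmt19Aux.local_inverse (Stmt19Aux.lin A) Stmt19Aux.bil (Xs, ys, Ss)
      (fun d hd => Stmt19Aux.jac_inj hA hPs hDs hsc hXS d hd)
  rw [hw0] at hg1 hg2 hg3
  let p : ℝ → Stmt19Aux.W n m := fun ε => (0, b, C + ε • Cbar)
  have hp : ContDiff ℝ 1 p := by
    refine contDiff_const.prodMk (contDiff_const.prodMk ?_)
    exact contDiff_const.add (contDiff_id.smul contDiff_const)
  let wf : ℝ → Stmt19Aux.W n m := fun ε => g (p ε)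
  have hwf : ContDiffAt ℝ 1 wf εbar := ContDiffAt.comp εbar hg1 hp.contDiffAt
  have hwfe : wf εbar = (Xs, ys, Ss) := hg2
  have hcont : Filter.Tendsto wf (nhds εbar) (nhds (Xs, ys, Ss)) := by
    have := hwf.continuousAt
    rw [ContinuousAt, hwfe] at this
    exact this
  have hc1 : Filter.Tendsto (fun ε => (wf ε).1) (nhds εbar) (nhds Xs) :=
    (continuous_fst.tendsto (Xs, ys, Ss)).comp hcont
  have hc2 : Filter.Tendsto (fun ε => (wf ε).2.2) (nhds εbar) (nhds Ss) :=
    ((continuous_snd.comp continuous_snd).tendsto (Xs, ys, Ss)).comp hcont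
  have ev1 : ∀ᶠ ε in nhds εbar, ContDiffAt ℝ 1 wf ε := hwf.eventually (by simp)
  have ev2 : ∀ᶠ ε in nhds εbar, Stmt19Aux.lin A (wf ε) + Stmt19Aux.bil (wf ε) (wf ε) = p ε :=
    hp.continuous.continuousAt.eventually hg3
  have ev3 : ∀ᶠ ε in nhds εbar, wf ε ∈ O := hcont.eventually (hO.mem_nhds hwO)
  have ev4 : ∀ᶠ ε in nhds εbar, ∀ z : Fin n → ℝ, z ≠ 0 →
      0 < z ⬝ᵥ (((wf ε).1 + (wf ε).2.2) *ᵥ z) :=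
    (hc1.add hc2).eventually (Stmt19Aux.isOpen_quad.mem_nhds (Stmt19Aux.quad_of_posDef hsc))
  have ev5 : ∀ᶠ ε in nhds εbar, Xs.rank ≤ (wf ε).1.rank :=
    hc1.eventually (Stmt19Aux.rank_lsc Xs)
  have ev6 : ∀ᶠ ε in nhds εbar, Ss.rank ≤ (wf ε).2.2.rank :=
    hc2.eventually (Stmt19Aux.rank_lsc Ss)
  have ev7 : ∀ᶠ ε in nhds εbar, ε ∈ interior (Eset C Cbar A b) :=
    isOpen_interior.mem_nhds hεbar
  have ev := ev1.and (ev2.and (ev3.and (ev4.and (ev5.and (ev6.and ev7)))))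
  rw [Metric.eventually_nhds_iff_ball] at ev
  obtain ⟨ξ, hξ, hev⟩ := ev
  rw [Real.ball_eq_Ioo] at hev
  have hrs := Stmt19Aux.rank_add hXS hsc
  have huniq : ∀ ε ∈ Set.Ioo (εbar - ξ) (εbar + ξ),
      (PrimalOpt C Cbar A b ε = {(wf ε).1} ∧ DualOpt C Cbar A b ε = {((wf ε).2.1, (wf ε).2.2)}) ∧
      ((wf ε).1 + (wf ε).2.2).PosDef ∧ (wf ε).1.rank = Xs.rank ∧ (wf ε).2.2.rank = Ss.rank := by
    intro ε hε
    obtain ⟨_, h2, h3, h4, h5, h6, _⟩ := hev ε hε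
    obtain ⟨k1, k2, k3, k4⟩ := Stmt19Aux.good_point hC hCb hA h2 h4
    have hr := Stmt19Aux.rank_add k3 k4
    exact ⟨Stmt19Aux.unique_of_inj k1 k2 k3 hO h3 hinj, k4, by omega, by omega⟩
  refine ⟨ξ, hξ, fun ε hε => (hev ε hε).2.2.2.2.2.2, fun ε => (wf ε).1, fun ε => (wf ε).2.1,
    fun ε => (wf ε).2.2, fun ε hε => (huniq ε hε).1,
    fun ε hε => (hev ε hε).1.contDiffWithinAt, ?_, ?_, ?_, fun ε hε => (huniq ε hε).2, ?_⟩
  · simp only [hwfe]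
  · simp only [hwfe]
  · simp only [hwfe]
  · rintro ⟨_, _, h⟩
    obtain ⟨ε, ⟨hε, _⟩, hne⟩ := h ξ hξ
    apply hne
    rintro X y S X' y' S' ⟨hX, hS⟩ ⟨hX', hS'⟩
    obtain ⟨⟨u1, u2⟩, _, u3, u4⟩ := huniq ε hε
    have a1 := intrinsicInterior_subset hX
    have a2 := intrinsicInterior_subset hS
    have a3 := intrinsicInterior_subset hX'
    have a4 := intrinsicInterior_subset hS'
    rw [u1, Set.mem_singleton_iff] at a1
    rw [u2, Set.mem_singleton_iff, Prod.mk.injEq] at a2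
    rw [hPs, Set.mem_singleton_iff] at a3
    rw [hDs, Set.mem_singleton_iff, Prod.mk.injEq] at a4
    rw [a1, a2.2, a3, a4.2]
    exact ⟨u3, u4⟩
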